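/- arXiv:2110.08671 — 5 statements merged into one kernel-verified Lean document; each statement's English description precedes it below -/
import Mathlib

section
/- Let ε ∈ (0,1], v̄ > 0, s̄ > 0, c_d ∈ ℝ, η > 0, ξ > 0 with ηξ > 1, and fix s ∈ ℝ. Define g(v) = ε·v/v̄ + (1−ε)·s/s̄, F_d(v) = (v + s − c_d − ηξ·v)·g(v), and v*(s) = [(1−ε)(ηξ−1)·v̄·s − ε·s̄·(s − c_d)] / (2ε(1−ηξ)·s̄). Then v*(s) is the unique global maximizer of F_d on ℝ: for every v ≠ v*(s), F_d(v) < F_d(v*(s)). -/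
section AffineProduct

variable {R : Type*} [CommRing R] {a b c d x₀ : R}

theorem affine_mul_affine_eq_vertex_add_sq (hx₀ : 2 * (a * c) * x₀ + (a * d + b * c) = 0) (x : R) :
    (a * x + b) * (c * x + d) = (a * x₀ + b) * (c * x₀ + d) + a * c * (x - x₀) ^ 2 := by
  linear_combination (x - x₀) * hx₀

theorem affine_mul_affine_lt_vertex [LinearOrder R] [IsStrictOrderedRing R]
    (hac : a * c < 0) (hx₀ : 2 * (a * c) * x₀ + (a * d + b * c) = 0) {x : R} (hx : x ≠ x₀) :
    (a * x + b) * (c * x + d) < (a * x₀ + b) * (c * x₀ + d) := by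
  have square_pos : 0 < (x - x₀) ^ 2 := sq_pos_of_ne_zero (sub_ne_zero.2 hx)
  rw [affine_mul_affine_eq_vertex_add_sq hx₀ x]
  exact add_lt_of_neg_right _ (mul_neg_of_neg_of_pos hac square_pos)

end AffineProduct

section GameRule

variable {K : Type*} [Field K] {ε vb sb cd κ s vstar : K}

theorem utility_vertex_eq_of_eq_gameRule [NeZero (2 : K)]
    (hε : ε ≠ 0) (hvb : vb ≠ 0) (hsb : sb ≠ 0) (hκ : 1 - κ ≠ 0)
    (hvstar : vstar = ((1 - ε) * (κ - 1) * vb * s - ε * sb * (s - cd)) /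
      (2 * ε * (1 - κ) * sb)) :
    2 * ((1 - κ) * (ε / vb)) * vstar +
      ((1 - κ) * ((1 - ε) * s / sb) + (s - cd) * (ε / vb)) = 0 := by
  have two_ne : (2 : K) ≠ 0 := two_ne_zero
  have cleared := (eq_div_iff (by simp [*])).1 hvstar
  field_simp
  linear_combination cleared

/-- Here `κ` is the paper's `ηξ`, and `hlead` says that the leading coefficient of the quadratic
`Fd` is negative. -/
theorem vstar_unique_global_maximizer_general [LinearOrder K] [IsStrictOrderedRing K]
    (hlead : (1 - κ) * (ε / vb) < 0) (hsb : sb ≠ 0) {g Fd : K → K}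
    (hg : ∀ v, g v = ε * v / vb + (1 - ε) * s / sb)
    (hFd : ∀ v, Fd v = (v + s - cd - κ * v) * g v)
    (hvstar : vstar = ((1 - ε) * (κ - 1) * vb * s - ε * sb * (s - cd)) /
      (2 * ε * (1 - κ) * sb)) :
    ∀ v : K, v ≠ vstar → Fd v < Fd vstar := by
  intro v hv
  obtain ⟨hκ, hε, hvb⟩ : 1 - κ ≠ 0 ∧ ε ≠ 0 ∧ vb ≠ 0 := by
    simpa only [ne_eq, mul_eq_zero, div_eq_zero_iff, not_or] using hlead.ne
  have Fd_eq (w : K) :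
      Fd w = ((1 - κ) * w + (s - cd)) * (ε / vb * w + (1 - ε) * s / sb) := by
    rw [hFd, hg]
    ring
  rw [Fd_eq, Fd_eq]
  exact affine_mul_affine_lt_vertex hlead (utility_vertex_eq_of_eq_gameRule hε hvb hsb hκ hvstar) hv

end GameRule

/-- Under `ηξ > 1`, the paper's game rule value `v*(s)` is the
unique global maximizer of the device's utility integrand `F_d` on ℝ. -/
theorem vstar_unique_global_maximizer
    (ε vb sb cd η ξ s : ℝ)
    (hε : ε ∈ Set.Ioc (0:ℝ) 1) (hvb : 0 < vb) (hsb : 0 < sb)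
    (hη : 0 < η) (hξ : 0 < ξ) (hηξ : 1 < η * ξ)
    (g Fd : ℝ → ℝ) (vstar : ℝ)
    (hg : ∀ v, g v = ε * v / vb + (1 - ε) * s / sb)
    (hFd : ∀ v, Fd v = (v + s - cd - η * ξ * v) * g v)
    (hvstar : vstar = ((1 - ε) * (η * ξ - 1) * vb * s - ε * sb * (s - cd)) /
      (2 * ε * (1 - η * ξ) * sb)) :
    ∀ v : ℝ, v ≠ vstar → Fd v < Fd vstar := by
  have hlead : (1 - η * ξ) * (ε / vb) < 0 :=
    mul_neg_of_neg_of_pos (sub_neg.2 hηξ) (div_pos hε.1 hvb)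
  exact vstar_unique_global_maximizer_general hlead hsb.ne' hg hFd hvstar
end

section
/- Let ε ∈ (0,1], v̄ > 0, s̄ > 0, c_d ∈ ℝ, η > 0, ξ > 0 with ηξ > 1, fix s ∈ ℝ and T ≥ 0. Define g(v) = ε·v/v̄ + (1−ε)·s/s̄, F_d(v) = (v + s − c_d − ηξ·v)·g(v), and v*(s) = [(1−ε)(ηξ−1)·v̄·s − ε·s̄·(s − c_d)] / (2ε(1−ηξ)·s̄). Then for every function v : ℝ → ℝ such that t ↦ F_d(v(t)) is integrable on [0,T], the device's expected utility satisfies ∫₀ᵀ F_d(v(t)) dt ≤ T · F_d(v*(s)); i.e., the constant strategy v ≡ v*(s) maximizes U_d = ∫₀ᵀ F_d(v(t)) dt. -/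
open intervalIntegral MeasureTheory

/-!
Writing `k` for `ηξ`, the payoff `F_d` is a product of two affine functions of `v`, with slopes
`1 - k < 0` and `ε / vb > 0`. It is therefore a downward parabola, and `v*(s)` is its vertex.
The resulting bound `F_d(v) ≤ F_d(v*)` is pointwise, so it can be integrated against any finite
measure on the time axis.
-/

theorem affine_mul_affine_eq_add_sq_of_critical {R : Type*} [CommRing R] {a b c d x₀ : R}
    (h : 2 * (a * c) * x₀ + (a * d + b * c) = 0) (x : R) :
    (a * x + b) * (c * x + d) = (a * x₀ + b) * (c * x₀ + d) + a * c * (x - x₀) ^ 2 := by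
  linear_combination (x - x₀) * h

theorem affine_mul_affine_le_of_critical {R : Type*} [CommRing R] [LinearOrder R]
    [IsStrictOrderedRing R] {a b c d x₀ : R} (hac : a * c ≤ 0)
    (h : 2 * (a * c) * x₀ + (a * d + b * c) = 0) (x : R) :
    (a * x + b) * (c * x + d) ≤ (a * x₀ + b) * (c * x₀ + d) := by
  rw [affine_mul_affine_eq_add_sq_of_critical h x]
  exact add_le_of_nonpos_right (mul_nonpos_of_nonpos_of_nonneg hac (sq_nonneg _))

theorem vstar_critical {K : Type*} [Field K] [NeZero (2 : K)] {ε vb sb cd k s vstar : K}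
    (hε : ε ≠ 0) (hvb : vb ≠ 0) (hsb : sb ≠ 0) (hk : 1 - k ≠ 0)
    (hvstar : vstar = ((1 - ε) * (k - 1) * vb * s - ε * sb * (s - cd)) /
      (2 * ε * (1 - k) * sb)) :
    2 * ((1 - k) * (ε / vb)) * vstar +
      ((1 - k) * ((1 - ε) * s / sb) + (s - cd) * (ε / vb)) = 0 := by
  have hden : 2 * ε * (1 - k) * sb ≠ 0 := by simp [hε, hk, hsb, two_ne_zero]
  rw [eq_div_iff hden] at hvstar
  field_simp
  linear_combination hvstar

theorem Fd_le_Fd_vstar {K : Type*} [Field K] [LinearOrder K] [IsStrictOrderedRing K]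
    {ε vb sb cd k s vstar : K} {g Fd : K → K}
    (hε : 0 < ε) (hvb : 0 < vb) (hsb : sb ≠ 0) (hk : 1 < k)
    (hg : ∀ v, g v = ε * v / vb + (1 - ε) * s / sb)
    (hFd : ∀ v, Fd v = (v + s - cd - k * v) * g v)
    (hvstar : vstar = ((1 - ε) * (k - 1) * vb * s - ε * sb * (s - cd)) /
      (2 * ε * (1 - k) * sb)) (v : K) :
    Fd v ≤ Fd vstar := by
  have hFd_affine (x : K) :
      Fd x = ((1 - k) * x + (s - cd)) * (ε / vb * x + (1 - ε) * s / sb) := by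
    rw [hFd, hg]
    ring
  have hslopes : (1 - k) * (ε / vb) ≤ 0 :=
    mul_nonpos_of_nonpos_of_nonneg (sub_nonpos.2 hk.le) (div_pos hε hvb).le
  rw [hFd_affine, hFd_affine]
  exact affine_mul_affine_le_of_critical hslopes
    (vstar_critical hε.ne' hvb.ne' hsb (sub_ne_zero.2 hk.ne) hvstar) v

theorem integral_le_measureReal_univ_mul_of_ae_le {Ω : Type*} [MeasurableSpace Ω]
    {μ : Measure Ω} [IsFiniteMeasure μ] {f : Ω → ℝ} {M : ℝ}
    (hf : Integrable f μ) (hM : ∀ᵐ ω ∂μ, f ω ≤ M) :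
    ∫ ω, f ω ∂μ ≤ μ.real Set.univ * M :=
  calc ∫ ω, f ω ∂μ ≤ ∫ _, M ∂μ := integral_mono_ae hf (integrable_const M) hM
    _ = μ.real Set.univ * M := by rw [MeasureTheory.integral_const, smul_eq_mul]

theorem constant_vstar_maximizes_Ud_general {Ω : Type*} [MeasurableSpace Ω]
    (μ : Measure Ω) [IsFiniteMeasure μ] {ε vb sb cd k s vstar : ℝ} {g Fd : ℝ → ℝ}
    (hε : 0 < ε) (hvb : 0 < vb) (hsb : sb ≠ 0) (hk : 1 < k)
    (hg : ∀ v, g v = ε * v / vb + (1 - ε) * s / sb)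
    (hFd : ∀ v, Fd v = (v + s - cd - k * v) * g v)
    (hvstar : vstar = ((1 - ε) * (k - 1) * vb * s - ε * sb * (s - cd)) /
      (2 * ε * (1 - k) * sb))
    (v : Ω → ℝ) (hv : Integrable (fun ω => Fd (v ω)) μ) :
    ∫ ω, Fd (v ω) ∂μ ≤ μ.real Set.univ * Fd vstar :=
  integral_le_measureReal_univ_mul_of_ae_le hv <|
    .of_forall fun ω => Fd_le_Fd_vstar hε hvb hsb hk hg hFd hvstar (v ω)

/-- Under `ηξ > 1`, the constant strategy `v ≡ v*(s)` maximizes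
the device's expected utility `U_d = ∫₀ᵀ F_d(v(t)) dt` over all strategies
`v : ℝ → ℝ` with integrable payoff. -/
theorem constant_vstar_maximizes_Ud
    (ε vb sb cd η ξ s T : ℝ)
    (hε : ε ∈ Set.Ioc (0:ℝ) 1) (hvb : 0 < vb) (hsb : 0 < sb)
    (hη : 0 < η) (hξ : 0 < ξ) (hηξ : 1 < η * ξ) (hT : 0 ≤ T)
    (g Fd : ℝ → ℝ) (vstar : ℝ)
    (hg : ∀ v, g v = ε * v / vb + (1 - ε) * s / sb)
    (hFd : ∀ v, Fd v = (v + s - cd - η * ξ * v) * g v)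
    (hvstar : vstar = ((1 - ε) * (η * ξ - 1) * vb * s - ε * sb * (s - cd)) /
      (2 * ε * (1 - η * ξ) * sb)) :
    ∀ v : ℝ → ℝ, IntegrableOn (fun t => Fd (v t)) (Set.Icc 0 T) →
      ∫ t in (0:ℝ)..T, Fd (v t) ≤ T * Fd vstar := by
  intro v hv
  simpa [integral_of_le hT, ← integral_Icc_eq_integral_Ioc, hT] using
    constant_vstar_maximizes_Ud_general (volume.restrict (Set.Icc 0 T))
      hε.1 hvb hsb.ne' hηξ hg hFd hvstar v hv
end

section
/- Let ε ∈ (0,1), v̄ > 0, s̄ > 0, c_d ∈ ℝ, η > 0, ξ > 0 with ηξ > 1, R ∈ ℝ, α_s ≥ 0, β_s ≥ 0, θ ∈ [0,1]. Define v*(s) = [(1−ε)(ηξ−1)·v̄·s − ε·s̄·(s − c_d)] / (2ε(1−ηξ)·s̄), g(v,s) = ε·v/v̄ + (1−ε)·s/s̄, F_s(s) = (R + α_s·θ + β_s − v*(s) − s)·g(v*(s), s), A₀ = ε/v̄ + (ηξ−1)(ε−1)/s̄, A₁ = 2(ηξ−1), and assume v̄·A₀/(ε·A₁) + 1 > 0.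 Then the unique global maximizer of F_s on ℝ is s* = (R + α_s·θ + β_s + c_d/A₁) / (2·(v̄·A₀/(ε·A₁) + 1)) + c_d·ε / (2·v̄·A₁·(A₀/A₁ − (ε−1)/s̄)); i.e., for every s ≠ s*, F_s(s) < F_s(s*). -/
/-!
Along the game rule both the server's net reward and the collection probability are affine in `s`,
so the integrand is a product `(c - a * s) * (b * s - d)`. When `0 < a * b` this is a concave
quadratic whose vertex is the midpoint of the two roots `c / a` and `d / b`, and the two summands of
`s*` are exactly the halves of these roots.
-/

section ServerUtility

variable {K : Type*} [Field K]

theorem affine_mul_affine_eq_sub_sq {a b : K} (c d s : K) (ha : 2 * a ≠ 0) (hb : 2 * b ≠ 0) :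
    (c - a * s) * (b * s - d) =
      (c - a * (c / (2 * a) + d / (2 * b))) * (b * (c / (2 * a) + d / (2 * b)) - d) -
        a * b * (s - (c / (2 * a) + d / (2 * b))) ^ 2 := by
  set m := c / (2 * a) + d / (2 * b) with hm
  have vertex_eq : 2 * a * b * m = c * b + d * a := by
    have half_root_left : 2 * a * (c / (2 * a)) = c := mul_div_cancel₀ c ha
    have half_root_right : 2 * b * (d / (2 * b)) = d := mul_div_cancel₀ d hb
    linear_combination 2 * a * b * hm + b * half_root_left + a * half_root_right
  linear_combination (m - s) * vertex_eq

theorem affine_mul_affine_lt_of_ne_midpoint [LinearOrder K] [IsStrictOrderedRing K]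
    {a b c d s : K} (hab : 0 < a * b) (hs : s ≠ c / (2 * a) + d / (2 * b)) :
    (c - a * s) * (b * s - d) <
      (c - a * (c / (2 * a) + d / (2 * b))) * (b * (c / (2 * a) + d / (2 * b)) - d) := by
  have ha : 2 * a ≠ 0 := mul_ne_zero two_ne_zero (left_ne_zero_of_mul hab.ne')
  have hb : 2 * b ≠ 0 := mul_ne_zero two_ne_zero (right_ne_zero_of_mul hab.ne')
  rw [affine_mul_affine_eq_sub_sq c d s ha hb]
  exact sub_lt_self _ (mul_pos hab (sq_pos_of_ne_zero (sub_ne_zero.mpr hs)))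

/-- The device's game rule `v*(s)`; `κ` stands for the product `ηξ` of the cost scalars, the only
way in which they enter. -/
def gameRule (ε vb sb cd κ s : K) : K :=
  ((1 - ε) * (κ - 1) * vb * s - ε * sb * (s - cd)) / (2 * ε * (1 - κ) * sb)

/-- The successful data collection probability `g(v, s)`, not required to lie in `[0, 1]`. -/
def collectionProb (ε vb sb v s : K) : K :=
  ε * v / vb + (1 - ε) * s / sb

/-- The server's utility integrand `F_s`; `M` stands for the total reward `R + α_s θ + β_s`. -/
def serverUtility (ε vb sb cd κ M s : K) : K :=
  (M - gameRule ε vb sb cd κ s - s) * collectionProb ε vb sb (gameRule ε vb sb cd κ s) s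

/-- The paper's coefficient `A₀`, with `κ = ηξ`. -/
def coeffA₀ (ε vb sb κ : K) : K :=
  ε / vb + (κ - 1) * (ε - 1) / sb

/-- The paper's coefficient `A₁`, with `κ = ηξ`. -/
def coeffA₁ (κ : K) : K :=
  2 * (κ - 1)

/-- The slope in `s` of the server's total payment `v*(s) + s`. -/
def paymentSlope (ε vb sb κ : K) : K :=
  vb * coeffA₀ ε vb sb κ / (ε * coeffA₁ κ) + 1

/-- The slope in `s` of the collection probability `g(v*(s), s)` along the game rule. -/
def probSlope (ε vb sb κ : K) : K :=
  coeffA₀ ε vb sb κ / coeffA₁ κ - (ε - 1) / sb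

/-- The paper's `s*`, with `κ = ηξ` and `M = R + α_s θ + β_s`. -/
def serverOptimum (ε vb sb cd κ M : K) : K :=
  (M + cd / coeffA₁ κ) / (2 * paymentSlope ε vb sb κ) +
    cd * ε / (2 * vb * coeffA₁ κ * probSlope ε vb sb κ)

theorem serverOptimum_eq_midpoint (ε vb sb cd κ M : K) :
    serverOptimum ε vb sb cd κ M =
      (M + cd / coeffA₁ κ) / (2 * paymentSlope ε vb sb κ) +
        cd * ε / (vb * coeffA₁ κ) / (2 * probSlope ε vb sb κ) := by
  rw [serverOptimum, div_div (cd * ε)]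
  ring_nf

section AffineForm

variable [NeZero (2 : K)] {ε vb sb κ : K}

theorem gameRule_add_self (cd s : K) (hε : ε ≠ 0) (hvb : vb ≠ 0) (hsb : sb ≠ 0) (hκ : κ ≠ 1) :
    gameRule ε vb sb cd κ s + s = paymentSlope ε vb sb κ * s - cd / coeffA₁ κ := by
  have hκ_sub : κ - 1 ≠ 0 := sub_ne_zero.mpr hκ
  rw [gameRule, paymentSlope, coeffA₀, coeffA₁, ← neg_sub κ 1]
  field_simp
  ring

theorem collectionProb_gameRule (cd s : K) (hε : ε ≠ 0) (hvb : vb ≠ 0) (hsb : sb ≠ 0)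
    (hκ : κ ≠ 1) :
    collectionProb ε vb sb (gameRule ε vb sb cd κ s) s =
      probSlope ε vb sb κ * s - cd * ε / (vb * coeffA₁ κ) := by
  have hκ_sub : κ - 1 ≠ 0 := sub_ne_zero.mpr hκ
  rw [collectionProb, gameRule, probSlope, coeffA₀, coeffA₁, ← neg_sub κ 1]
  field_simp
  ring

theorem serverUtility_eq_affine_mul_affine (cd M s : K) (hε : ε ≠ 0) (hvb : vb ≠ 0)
    (hsb : sb ≠ 0) (hκ : κ ≠ 1) :
    serverUtility ε vb sb cd κ M s =
      (M + cd / coeffA₁ κ - paymentSlope ε vb sb κ * s) *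
        (probSlope ε vb sb κ * s - cd * ε / (vb * coeffA₁ κ)) := by
  rw [serverUtility, collectionProb_gameRule cd s hε hvb hsb hκ, sub_sub,
    gameRule_add_self cd s hε hvb hsb hκ]
  ring

theorem probSlope_eq (hvb : vb ≠ 0) (hsb : sb ≠ 0) (hκ : κ ≠ 1) :
    probSlope ε vb sb κ = ε / (2 * (κ - 1) * vb) + (1 - ε) / (2 * sb) := by
  have hκ_sub : κ - 1 ≠ 0 := sub_ne_zero.mpr hκ
  rw [probSlope, coeffA₀, coeffA₁]
  field_simp
  ring

end AffineForm

variable [LinearOrder K] [IsStrictOrderedRing K] {ε vb sb κ : K}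

theorem probSlope_pos (hε : ε ∈ Set.Ioo 0 1) (hvb : 0 < vb) (hsb : 0 < sb) (hκ : 1 < κ) :
    0 < probSlope ε vb sb κ := by
  have hε_pos : 0 < ε := hε.1
  have hε_compl : 0 < 1 - ε := sub_pos.mpr hε.2
  rw [probSlope_eq hvb.ne' hsb.ne' hκ.ne']
  positivity

theorem sstar_unique_global_maximizer_general (cd M : K) (hε : ε ≠ 0) (hvb : vb ≠ 0)
    (hsb : sb ≠ 0) (hκ : κ ≠ 1) (hslopes : 0 < paymentSlope ε vb sb κ * probSlope ε vb sb κ) :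
    ∀ s : K, s ≠ serverOptimum ε vb sb cd κ M →
      serverUtility ε vb sb cd κ M s <
        serverUtility ε vb sb cd κ M (serverOptimum ε vb sb cd κ M) := by
  intro s hs
  simp only [serverUtility_eq_affine_mul_affine cd M _ hε hvb hsb hκ]
  rw [serverOptimum_eq_midpoint] at hs ⊢
  exact affine_mul_affine_lt_of_ne_midpoint hslopes hs

end ServerUtility

/-- Given the device's game rule `v*(s)`, the paper's `s*` is the
unique global maximizer of the server's utility integrand `F_s` on ℝ. -/
theorem sstar_unique_global_maximizer
    (ε vb sb cd η ξ R αs βs θ : ℝ)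
    (hε : ε ∈ Set.Ioo (0:ℝ) 1) (hvb : 0 < vb) (hsb : 0 < sb)
    (hη : 0 < η) (hξ : 0 < ξ) (hηξ : 1 < η * ξ)
    (hαs : 0 ≤ αs) (hβs : 0 ≤ βs) (hθ : θ ∈ Set.Icc (0:ℝ) 1)
    (vstar : ℝ → ℝ) (g : ℝ → ℝ → ℝ) (Fs : ℝ → ℝ) (A0 A1 sstar : ℝ)
    (hvstar : ∀ s, vstar s = ((1 - ε) * (η * ξ - 1) * vb * s - ε * sb * (s - cd)) /
      (2 * ε * (1 - η * ξ) * sb))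
    (hg : ∀ v s, g v s = ε * v / vb + (1 - ε) * s / sb)
    (hFs : ∀ s, Fs s = (R + αs * θ + βs - vstar s - s) * g (vstar s) s)
    (hA0 : A0 = ε / vb + (η * ξ - 1) * (ε - 1) / sb)
    (hA1 : A1 = 2 * (η * ξ - 1))
    (hpos : vb * A0 / (ε * A1) + 1 > 0)
    (hsstar : sstar = (R + αs * θ + βs + cd / A1) / (2 * (vb * A0 / (ε * A1) + 1))
      + cd * ε / (2 * vb * A1 * (A0 / A1 - (ε - 1) / sb))) :
    ∀ s : ℝ, s ≠ sstar → Fs s < Fs sstar := by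
  subst hA0 hA1 hsstar
  obtain rfl : Fs = serverUtility ε vb sb cd (η * ξ) (R + αs * θ + βs) :=
    funext fun s ↦ by rw [hFs, hg, hvstar]; rfl
  exact sstar_unique_global_maximizer_general cd _ hε.1.ne' hvb.ne' hsb.ne' hηξ.ne'
    (mul_pos hpos (probSlope_pos hε hvb hsb hηξ))
end

section
/- (Press–Dyson orthogonality for the leader–requestor repeated game.) Let p : Fin 4 → ℝ and q : Fin 2 → ℝ, and define the 4×4 real matrix M by M i 0 = p i · q 0, M i 1 = p i · (1 − q 0), M i 2 = (1 − p i) · q 1, M i 3 = (1 − p i) · (1 − q 1). Define p̃ : Fin 4 → ℝ by p̃ = (p 0 − 1, p 1 − 1, p 2, p 3). If v : Fin 4 → ℝ satisfies the stationarity condition ∑ᵢ v i · M i j = v j for every j ∈ Fin 4 (i.e., vᵀM = vᵀ), then ∑ᵢ v i · p̃ i = 0. -/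
/-!
The leader cooperates exactly in the states `cc` and `cd`, and `p i` is the total probability of
moving from state `i` into `{cc, cd}`. Under a stationary `v` the mass flowing into a set of states
equals the mass of the set, so `∑ i, v i * p i = v 0 + v 1`, whatever the requestor does.
-/

section ZeroDeterminant

variable {ι R : Type*}

/-- The zero-determinant (Press–Dyson) vector `p̃` of a player who cooperates with probability `p i`
after state `i`: the change in that player's cooperation probability, where `s` is the set of states
in which the player has just cooperated. -/
def zdVector [DecidableEq ι] [Ring R] (s : Finset ι) (p : ι → R) (i : ι) : R :=
  p i - if i ∈ s then 1 else 0

theorem zdVector_zero_one [Ring R] (p : Fin 4 → R) :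
    zdVector {0, 1} p = ![p 0 - 1, p 1 - 1, p 2, p 3] := by
  ext i
  fin_cases i <;> simp [zdVector]

theorem sum_mul_zdVector [Fintype ι] [DecidableEq ι] [Ring R] (s : Finset ι) (p v : ι → R) :
    ∑ i, v i * zdVector s p i = ∑ i, v i * p i - ∑ i ∈ s, v i := by
  simp [zdVector, mul_sub, Finset.sum_sub_distrib]

theorem sum_mul_sum_eq_sum_of_stationary [Fintype ι] [NonUnitalNonAssocSemiring R] {s : Finset ι}
    {M : ι → ι → R} {v : ι → R} (hstat : ∀ j ∈ s, ∑ i, v i * M i j = v j) :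
    ∑ i, v i * ∑ j ∈ s, M i j = ∑ j ∈ s, v j :=
  calc ∑ i, v i * ∑ j ∈ s, M i j
      = ∑ i, ∑ j ∈ s, v i * M i j := by simp only [Finset.mul_sum]
    _ = ∑ j ∈ s, ∑ i, v i * M i j := Finset.sum_comm
    _ = ∑ j ∈ s, v j := Finset.sum_congr rfl hstat

theorem press_dyson_orthogonality_general [Fintype ι] [DecidableEq ι] [Ring R] {s : Finset ι}
    {p : ι → R} {M : ι → ι → R} {v : ι → R} (hp : ∀ i, ∑ j ∈ s, M i j = p i)
    (hstat : ∀ j ∈ s, ∑ i, v i * M i j = v j) :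
    ∑ i, v i * zdVector s p i = 0 := by
  rw [sum_mul_zdVector, sub_eq_zero, ← sum_mul_sum_eq_sum_of_stationary hstat]
  simp only [hp]

end ZeroDeterminant

/-- Press–Dyson orthogonality: any stationary vector `v` of the
Markov matrix `M` induced by the strategies `p`, `q` is orthogonal to the ZD
vector `p̃ = (p₀ - 1, p₁ - 1, p₂, p₃)`. -/
theorem press_dyson_orthogonality
    (p : Fin 4 → ℝ) (q : Fin 2 → ℝ) (M : Fin 4 → Fin 4 → ℝ) (v : Fin 4 → ℝ)
    (hM0 : ∀ i, M i 0 = p i * q 0)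
    (hM1 : ∀ i, M i 1 = p i * (1 - q 0))
    (hM2 : ∀ i, M i 2 = (1 - p i) * q 1)
    (hM3 : ∀ i, M i 3 = (1 - p i) * (1 - q 1))
    (hstat : ∀ j, ∑ i, v i * M i j = v j) :
    ∑ i, v i * (![p 0 - 1, p 1 - 1, p 2, p 3] i) = 0 := by
  have hp (i : Fin 4) : ∑ j ∈ {0, 1}, M i j = p i := by
    rw [Finset.sum_pair zero_ne_one, hM0, hM1]; ring
  simpa only [zdVector_zero_one] using press_dyson_orthogonality_general hp fun j _ ↦ hstat j
end

section
/- (Theorem 2: the ZD cooperation-enforcing strategy makes mutual cooperation the stable state.) Let p : Fin 4 → ℝ, q : Fin 2 → ℝ, and let M be the 4×4 matrix with M i 0 = p i · q 0, M i 1 = p i · (1 − q 0), M i 2 = (1 − p i) · q 1, M i 3 = (1 − p i) · (1 − q 1); let p̃ = (p 0 − 1, p 1 − 1, p 2, p 3). Let v : Fin 4 → ℝ satisfy v i ≥ 0 for all i, ∑ᵢ v i = 1, and ∑ᵢ v i · M i j = v j for every j. Let x, y : Fin 4 → ℝ satisfy the payoff orderings x 2 > x 0 > x 3 > x 1 and y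 1 > y 0 > y 3 > y 2, and the welfare condition x i + y i < x 0 + y 0 for every i ≠ 0. Suppose the leader adopts the ZD strategy: there exist γ ≠ 0 and χ ≥ 1 with p̃ i = γ·((x i − x 0) − χ·(y i − y 0)) for every i ∈ Fin 4. Then the expected payoffs E_b = ∑ᵢ v i · x i and E_r = ∑ᵢ v i · y i satisfy E_r ≤ y 0 and E_b ≤ x 0; that is, the highest expected payoff the requestor can obtain is the mutual-cooperation payoff y₀, achieved together with E_b = x₀. -/
/-!
Summing the stationarity equations over the states in which the leader cooperates shows that a
stationary distribution is orthogonal to the leader's strategy vector `p̃`. When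
`p̃ = γ((x - x₀) - χ(y - y₀))`, this reads `E_b - x₀ = χ(E_r - y₀)`, so for `χ ≥ 0` a positive
deviation `E_r - y₀` would make `E_b + E_r` exceed `x₀ + y₀`, against the welfare condition. Hence
`E_r ≤ y₀`, and `E_b ≤ x₀` follows from the same relation.
-/

open Matrix

section

variable {ι R : Type*}

/-- The Press–Dyson vector `p̃` of a player who cooperates exactly in the states of `C`: the
probability that the player cooperates in the next round, minus `1` in the states of `C`. The
cooperation probability given state `i` is encoded as the total transition weight `∑ j ∈ C, M i j`
from `i` to `C`. -/
noncomputable def pressDysonVector [Ring R] (M : Matrix ι ι R) (C : Finset ι) : ι → R :=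
  fun i => ∑ j ∈ C, M i j - (C : Set ι).indicator 1 i

variable [Fintype ι]

theorem dotProduct_pressDysonVector_eq_zero [Ring R] {M : Matrix ι ι R} {v : ι → R}
    (hstat : v ᵥ* M = v) (C : Finset ι) : v ⬝ᵥ pressDysonVector M C = 0 := by
  classical
  have flow_into_C : ∑ i, v i * ∑ j ∈ C, M i j = ∑ j ∈ C, v j :=
    calc ∑ i, v i * ∑ j ∈ C, M i j = ∑ j ∈ C, (v ᵥ* M) j := by
          simp only [Finset.mul_sum, vecMul, dotProduct]
          exact Finset.sum_comm
      _ = ∑ j ∈ C, v j := by rw [hstat]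
  have mass_of_C : ∑ i, v i * (C : Set ι).indicator 1 i = ∑ j ∈ C, v j := by
    simp [Set.indicator_apply]
  simp only [pressDysonVector, dotProduct, mul_sub, Finset.sum_sub_distrib, flow_into_C,
    mass_of_C, sub_self]

theorem dotProduct_sub_const_of_sum_eq_one [Ring R] {v : ι → R} (hsum : ∑ i, v i = 1)
    (f : ι → R) (c : R) : (v ⬝ᵥ fun i => f i - c) = v ⬝ᵥ f - c := by
  simp only [dotProduct, mul_sub, Finset.sum_sub_distrib, ← Finset.sum_mul, hsum, one_mul]

theorem dotProduct_le_of_mem_stdSimplex [Semiring R] [PartialOrder R] [IsOrderedRing R]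
    {v f : ι → R} {c : R} (hv : v ∈ stdSimplex R ι) (hf : ∀ i, f i ≤ c) : v ⬝ᵥ f ≤ c :=
  calc v ⬝ᵥ f ≤ v ⬝ᵥ fun _ => c := dotProduct_le_dotProduct_of_nonneg_left hf hv.1
    _ = c := by simp only [dotProduct, ← Finset.sum_mul, hv.2, one_mul]

theorem dotProduct_sub_eq_mul_of_pressDysonVector_eq [CommRing R] [NoZeroDivisors R]
    {M : Matrix ι ι R} {C : Finset ι} {v x y : ι → R} {a b γ χ : R} (hsum : ∑ i, v i = 1)
    (hstat : v ᵥ* M = v) (hγ : γ ≠ 0)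
    (hzd : ∀ i, pressDysonVector M C i = γ * ((x i - a) - χ * (y i - b))) :
    v ⬝ᵥ x - a = χ * (v ⬝ᵥ y - b) := by
  have hvec : pressDysonVector M C = γ • ((fun i => x i - a) - χ • fun i => y i - b) := funext hzd
  have orthogonal := dotProduct_pressDysonVector_eq_zero hstat C
  rw [hvec, dotProduct_smul, dotProduct_sub, dotProduct_smul,
    dotProduct_sub_const_of_sum_eq_one hsum, dotProduct_sub_const_of_sum_eq_one hsum,
    smul_eq_mul, smul_eq_mul] at orthogonal
  exact sub_eq_zero.mp ((mul_eq_zero.mp orthogonal).resolve_left hγ)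

theorem zd_enforces_mutual_cooperation_general [CommRing R] [LinearOrder R] [IsStrictOrderedRing R]
    {M : Matrix ι ι R} {C : Finset ι} {v x y : ι → R} {a b γ χ : R} (hv : v ∈ stdSimplex R ι)
    (hstat : v ᵥ* M = v) (hγ : γ ≠ 0) (hχ : 0 ≤ χ) (hw : ∀ i, x i + y i ≤ a + b)
    (hzd : ∀ i, pressDysonVector M C i = γ * ((x i - a) - χ * (y i - b))) :
    v ⬝ᵥ y ≤ b ∧ v ⬝ᵥ x ≤ a := by
  have relation := dotProduct_sub_eq_mul_of_pressDysonVector_eq hv.2 hstat hγ hzd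
  have welfare : v ⬝ᵥ x + v ⬝ᵥ y ≤ a + b := by
    rw [← dotProduct_add]
    exact dotProduct_le_of_mem_stdSimplex hv hw
  have scaled_deviation : (χ + 1) * (v ⬝ᵥ y - b) ≤ 0 := by linarith
  have hy : v ⬝ᵥ y - b ≤ 0 := nonpos_of_mul_nonpos_right scaled_deviation (by positivity)
  have hx : v ⬝ᵥ x - a ≤ 0 := relation.trans_le (mul_nonpos_of_nonneg_of_nonpos hχ hy)
  exact ⟨sub_nonpos.mp hy, sub_nonpos.mp hx⟩

end

theorem pressDysonVector_zero_one_eq {R : Type*} [Ring R] {M : Matrix (Fin 4) (Fin 4) R}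
    {p : Fin 4 → R} {r : R} (hM0 : ∀ i, M i 0 = p i * r) (hM1 : ∀ i, M i 1 = p i * (1 - r)) :
    pressDysonVector M {0, 1} = ![p 0 - 1, p 1 - 1, p 2, p 3] := by
  have cooperation_prob (i : Fin 4) : ∑ j ∈ {0, 1}, M i j = p i := by
    rw [Finset.sum_pair zero_ne_one, hM0, hM1, ← mul_add, add_sub_cancel, mul_one]
  ext i
  fin_cases i <;> simp [pressDysonVector, cooperation_prob]

/-- Theorem 2 of the paper: under the leader's ZD
cooperation-enforcing strategy `p̃ = γ((x − x₀·1) − χ(y − y₀·1))` with `γ ≠ 0`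
and `χ ≥ 1`, the long-term expected payoffs satisfy `E_r ≤ y₀` and `E_b ≤ x₀`:
mutual cooperation is the stable state. -/
theorem zd_enforces_mutual_cooperation
    (p : Fin 4 → ℝ) (q : Fin 2 → ℝ) (M : Fin 4 → Fin 4 → ℝ) (v x y : Fin 4 → ℝ)
    (γ χ : ℝ) (hγ : γ ≠ 0) (hχ : 1 ≤ χ)
    (hM0 : ∀ i, M i 0 = p i * q 0)
    (hM1 : ∀ i, M i 1 = p i * (1 - q 0))
    (hM2 : ∀ i, M i 2 = (1 - p i) * q 1)
    (hM3 : ∀ i, M i 3 = (1 - p i) * (1 - q 1))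
    (hv : ∀ i, 0 ≤ v i) (hsum : ∑ i, v i = 1)
    (hstat : ∀ j, ∑ i, v i * M i j = v j)
    (hx : x 2 > x 0 ∧ x 0 > x 3 ∧ x 3 > x 1)
    (hy : y 1 > y 0 ∧ y 0 > y 3 ∧ y 3 > y 2)
    (hw : ∀ i, i ≠ 0 → x i + y i < x 0 + y 0)
    (hzd : ∀ i, (![p 0 - 1, p 1 - 1, p 2, p 3] : Fin 4 → ℝ) i =
      γ * ((x i - x 0) - χ * (y i - y 0))) :
    (∑ i, v i * y i) ≤ y 0 ∧ (∑ i, v i * x i) ≤ x 0 := by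
  have hw' (i : Fin 4) : x i + y i ≤ x 0 + y 0 := by
    obtain rfl | hi := eq_or_ne i 0
    exacts [le_rfl, (hw i hi).le]
  exact zd_enforces_mutual_cooperation_general ⟨hv, hsum⟩ (funext hstat) hγ (zero_le_one.trans hχ)
    hw' fun i => (congrFun (pressDysonVector_zero_one_eq hM0 hM1) i).trans (hzd i)
end
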